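/- Let F ~ SSBM(N,K,p,q) with p = α·ρ(N), q = β·ρ(N) for constants 0 < α, β < ∞ and ρ(N) → 0 as N → ∞, and let C = B F Bᵀ be measured under the r-homogeneous and CO-1 constraints, with K fixed. Then the probability that the MAP estimator fails to recover the c-node profile vector x ∈ [K]^M from C (up to relabeling of the community indices) tends to zero in either of the following regimes: (i) M stays finite, r√ρ(N) → ∞, and α ≠ β; (ii) M, N → ∞ and (α+β)/2 − √(αβ) > lim_{M→∞} [ (K/2) · log M / (r² ρ(N) M) ]. -/

import Mathlib

open MeasureTheory ProbabilityTheory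
open scoped ENNReal NNReal

/-- Law (on `ℕ`, via the indicator `true ↦ 1`) of a Bernoulli random variable with
success probability `p`. -/
noncomputable def bernNat (p : ℝ≥0∞) (hp : p ≤ 1) : PMF ℕ :=
  (PMF.bernoulli p.toNNReal (by simpa using ENNReal.toNNReal_mono ENNReal.one_ne_top hp)).map fun b => if b then 1 else 0

/-- Law of the sum of `n` independent copies of an `ℕ`-valued random variable with law `μ`. -/
noncomputable def iidSum (μ : PMF ℕ) : ℕ → PMF ℕ
  | 0 => PMF.pure 0
  | n + 1 => (iidSum μ n).bind fun s => μ.map fun x => s + x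

/-- The binomial law `Binomial(n,p)` on `ℕ`. -/
noncomputable def binomialNat (p : ℝ≥0∞) (hp : p ≤ 1) (n : ℕ) : PMF ℕ :=
  iidSum (bernNat p hp) n

set_option linter.deprecated false in
lemma bern_map (p : ℝ≥0∞) (hp : p ≤ 1) (s k : ℕ) :
    ((bernNat p hp).map fun x => s + x) k =
      (if k = s then 1 - p else 0) + (if k = s + 1 then p else 0) := by
  have hp' : p ≠ ⊤ := ne_top_of_le_ne_top ENNReal.one_ne_top hp
  have h' : p.toNNReal ≤ 1 := by
    simpa using ENNReal.toNNReal_mono ENNReal.one_ne_top hp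
  have e : bernNat p hp = (PMF.bernoulli p.toNNReal h').map fun b => if b then 1 else 0 := rfl
  rw [e, PMF.map_comp]
  simp only [PMF.map_apply, tsum_bool]
  rw [PMF.bernoulli_apply, PMF.bernoulli_apply]
  simp [hp']

lemma iid_succ (p : ℝ≥0∞) (hp : p ≤ 1) (n k : ℕ) :
    binomialNat p hp (n+1) k = binomialNat p hp n k * (1 - p) +
      (if k = 0 then 0 else binomialNat p hp n (k-1) * p) := by
  unfold binomialNat
  rw [iidSum, PMF.bind_apply]
  simp_rw [bern_map, mul_add]
  rw [ENNReal.tsum_add]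
  congr 1
  · rw [tsum_eq_single k]
    · simp
    · intro b hb; simp [hb.symm]
  · rcases k with _ | k
    · simp
    · rw [tsum_eq_single k]
      · simp
      · intro b hb; simp [hb.symm]

lemma binom_toReal (p : ℝ) (h0 : 0 ≤ p) (h1 : p ≤ 1) (n k : ℕ) :
    (binomialNat (ENNReal.ofReal p) (ENNReal.ofReal_le_one.mpr h1) n k).toReal =
      n.choose k * p ^ k * (1 - p) ^ (n - k) := by
  induction n generalizing k with
  | zero =>
    rcases k with _ | k <;> simp [binomialNat, iidSum]
  | succ n ih =>
    have h1p : (1 - ENNReal.ofReal p).toReal = 1 - p := by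
      rw [ENNReal.toReal_sub_of_le (ENNReal.ofReal_le_one.mpr h1) (by simp)]
      simp [h0]
    have hne : ∀ j, binomialNat (ENNReal.ofReal p) (ENNReal.ofReal_le_one.mpr h1) n j ≠ ⊤ :=
      fun j => PMF.apply_ne_top _ _
    rw [iid_succ, ENNReal.toReal_add, ENNReal.toReal_mul, ih, h1p]
    · rcases k with _ | k
      · simp [pow_succ]
      · simp only [Nat.add_eq_zero_iff, one_ne_zero, and_false, if_false, ENNReal.toReal_mul,
          Nat.add_sub_cancel, ih, ENNReal.toReal_ofReal h0]
        rw [Nat.choose_succ_succ, Nat.add_sub_add_right]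
        push_cast
        rcases lt_or_ge k n with h | h
        · obtain ⟨t, rfl⟩ : ∃ t, n = k + 1 + t := ⟨n - (k+1), by omega⟩
          have e1 : k + 1 + t - (k + 1) = t := by omega
          have e2 : k + 1 + t - k = t + 1 := by omega
          rw [e1, e2]; ring
        · rw [Nat.choose_eq_zero_of_lt (show n < k + 1 by omega)]
          push_cast; ring
    · exact ENNReal.mul_ne_top (hne _) (by simp)
    · split_ifs
      · simp
      · exact ENNReal.mul_ne_top (hne _) (by simp)

lemma bc_sum (p q : ℝ) (h0 : 0 ≤ p) (h1 : p ≤ 1) (h0' : 0 ≤ q) (h1' : q ≤ 1) (n : ℕ) :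
    ∑ k ∈ Finset.range (n+1), Real.sqrt ((n.choose k * p ^ k * (1 - p) ^ (n - k)) *
      (n.choose k * q ^ k * (1 - q) ^ (n - k))) =
      (Real.sqrt (p * q) + Real.sqrt ((1-p)*(1-q))) ^ n := by
  rw [add_pow]
  refine Finset.sum_congr rfl fun k _ => ?_
  have : ((n.choose k * p ^ k * (1 - p) ^ (n - k)) *
      (n.choose k * q ^ k * (1 - q) ^ (n - k)))
      = (Real.sqrt (p * q) ^ k * Real.sqrt ((1-p)*(1-q)) ^ (n-k) * (n.choose k : ℝ))^2 := by
    have a1 : Real.sqrt (p*q) ^ 2 = p * q := Real.sq_sqrt (by positivity)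
    have a2 : Real.sqrt ((1-p)*(1-q)) ^ 2 = (1-p)*(1-q) :=
      Real.sq_sqrt (mul_nonneg (by linarith) (by linarith))
    rw [mul_pow, mul_pow, ← pow_mul, ← pow_mul, mul_comm k 2, mul_comm (n-k) 2, pow_mul, pow_mul,
      a1, a2, mul_pow, mul_pow]
    ring
  rw [this, Real.sqrt_sq (by positivity)]

lemma bc_le (α β ρ : ℝ) (hρ : 0 ≤ ρ) (h1 : α * ρ ≤ 1) (h2 : β * ρ ≤ 1)
    (n : ℕ) :
    (Real.sqrt (α * ρ * (β * ρ)) + Real.sqrt ((1-α * ρ)*(1-β * ρ))) ^ n ≤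
      Real.exp (-(n * ρ * ((α + β) / 2 - Real.sqrt (α * β)))) := by
  have e1 : Real.sqrt (α * ρ * (β * ρ)) = ρ * Real.sqrt (α * β) := by
    rw [show α * ρ * (β * ρ) = ρ^2 * (α * β) by ring, Real.sqrt_mul (by positivity),
      Real.sqrt_sq hρ]
  have e2 : Real.sqrt ((1-α * ρ)*(1-β * ρ)) ≤ 1 - (α*ρ+β*ρ)/2 := by
    apply Real.sqrt_le_iff.mpr
    constructor
    · linarith
    · nlinarith [sq_nonneg (α * ρ - β * ρ)]
  have e3 := Real.add_one_le_exp (-(ρ * ((α + β) / 2 - Real.sqrt (α * β))))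
  calc _ ≤ (Real.exp (-(ρ * ((α + β) / 2 - Real.sqrt (α * β))))) ^ n := by
        gcongr
        rw [e1]; nlinarith
    _ = _ := by
      rw [← Real.exp_nat_mul]; congr 1; ring

/-- index type of unordered pairs -/
abbrev EdgeT (M : ℕ) := {e : Fin M × Fin M // e.1 < e.2}

/-- pairs on which the two labelings disagree -/
def disag {M K : ℕ} (x y : Fin M → Fin K) : Finset (EdgeT M) :=
  Finset.univ.filter fun e => ¬ (x e.1.1 = x e.1.2 ↔ y e.1.1 = y e.1.2)

lemma card_le_disag {M K : ℕ} (x y : Fin M → Fin K) (P : Finset (Fin M × Fin M))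
    (h1 : ∀ p ∈ P, ¬ (x p.1 = x p.2 ↔ y p.1 = y p.2))
    (h2 : ∀ p ∈ P, p.swap ∉ P) : P.card ≤ (disag x y).card := by
  classical
  refine le_trans (Finset.card_le_card (t := (disag x y).image
    (fun e => if e.1 ∈ P then e.1 else e.1.swap)) ?_) Finset.card_image_le
  intro p hp
  have hd := h1 p hp
  have hs := h2 p hp
  rw [Finset.mem_image]
  rcases lt_trichotomy p.1 p.2 with h | h | h
  · exact ⟨⟨p, h⟩, by simp [disag, hd], by simp [hp]⟩
  · exact absurd (by simp [h]) hd
  · refine ⟨⟨p.swap, h⟩, ?_, by simp [hs]⟩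
    simp only [disag, Finset.mem_filter, Finset.mem_univ, true_and, Prod.fst_swap, Prod.snd_swap]
    rwa [eq_comm, eq_comm (a := y p.2)]

/-- community size -/
def csize {M K : ℕ} (x : Fin M → Fin K) (a : Fin K) : ℕ :=
  (Finset.univ.filter fun i => x i = a).card

lemma disag_small {M K : ℕ} (x y : Fin M → Fin K) (s : ℝ) (hs : ∀ a, s ≤ csize x a) :
    (hammingDist x y : ℝ) * (2 * s - hammingDist x y) ≤ (disag x y).card := by
  classical
  set U : Finset (Fin M) := Finset.univ.filter fun i => x i ≠ y i with hU
  have hUc : hammingDist x y = U.card := rfl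
  set V : Fin M → Finset (Fin M) := fun i =>
    Finset.univ.filter fun j => x j = y j ∧ (x j = x i ∨ x j = y i) with hV
  have key : ∀ i ∈ U, 2 * s - U.card ≤ ((V i).card : ℝ) := by
    intro i hi
    have hi' : x i ≠ y i := by simpa [hU] using hi
    have hsub : (Finset.univ.filter fun j => x j = x i) ∪ (Finset.univ.filter fun j => x j = y i)
        ⊆ V i ∪ U := by
      intro j
      simp only [hV, hU, Finset.mem_union, Finset.mem_filter, Finset.mem_univ, true_and]
      tauto
    have hdisj : Disjoint (Finset.univ.filter fun j => x j = x i)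
        (Finset.univ.filter fun j => x j = y i) := by
      rw [Finset.disjoint_filter]
      intro j _ h h'
      exact hi' (h.symm.trans h')
    have h3 := (Finset.card_le_card hsub).trans (Finset.card_union_le _ _)
    rw [Finset.card_union_of_disjoint hdisj] at h3
    have h4 : (csize x (x i) : ℝ) + csize x (y i) ≤ (V i).card + U.card := by
      exact_mod_cast h3
    linarith [hs (x i), hs (y i)]
  set P : Finset (Fin M × Fin M) := Finset.univ.filter fun p => p.1 ∈ U ∧ p.2 ∈ V p.1 with hP
  have hPc : P.card = ∑ i ∈ U, (V i).card := by
    rw [← Finset.card_sigma]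
    refine Finset.card_bij (fun p _ => ⟨p.1, p.2⟩) ?_ ?_ ?_
    · intro p hp
      simpa [hP] using hp
    · rintro ⟨a, b⟩ _ ⟨c, d⟩ _ h
      simp at h
      simp [h]
    · rintro ⟨a, b⟩ h
      exact ⟨(a, b), by simpa [hP] using h, rfl⟩
  have hle : P.card ≤ (disag x y).card := by
    apply card_le_disag
    · rintro ⟨i, j⟩ hp
      simp only [hP, hU, hV, Finset.mem_filter, Finset.mem_univ, true_and] at hp ⊢
      grind
    · rintro ⟨i, j⟩ hp
      simp only [hP, hU, hV, Finset.mem_filter, Finset.mem_univ, true_and, Prod.swap] at hp ⊢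
      grind
  calc (hammingDist x y : ℝ) * (2 * s - hammingDist x y) = ∑ i ∈ U, (2 * s - U.card) := by
        rw [hUc, Finset.sum_const, nsmul_eq_mul]
    _ ≤ ∑ i ∈ U, ((V i).card : ℝ) := Finset.sum_le_sum key
    _ = P.card := by rw [hPc]; push_cast; rfl
    _ ≤ _ := by exact_mod_cast hle

/-- contingency table -/
def ctab {M K : ℕ} (x y : Fin M → Fin K) (a b : Fin K) : ℕ :=
  (Finset.univ.filter fun i => x i = a ∧ y i = b).card

lemma ctab_mul_le {M K : ℕ} (x y : Fin M → Fin K) (a b a' b' : Fin K)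
    (h : ¬ (a = a' ↔ b = b')) : ctab x y a b * ctab x y a' b' ≤ (disag x y).card := by
  classical
  rw [ctab, ctab, ← Finset.card_product]
  apply card_le_disag
  · rintro ⟨i, j⟩ hp
    simp only [Finset.mem_product, Finset.mem_filter, Finset.mem_univ, true_and] at hp ⊢
    grind
  · rintro ⟨i, j⟩ hp
    simp only [Finset.mem_product, Finset.mem_filter, Finset.mem_univ, true_and, Prod.swap] at hp ⊢
    grind

lemma csize_eq {M K : ℕ} (x y : Fin M → Fin K) (a : Fin K) :
    csize x a = ∑ b, ctab x y a b := by
  classical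
  unfold csize ctab
  rw [Finset.card_eq_sum_card_fiberwise (f := y) (t := Finset.univ) (fun _ _ => by simp)]
  simp only [Finset.filter_filter]

lemma hamming_eq {M K : ℕ} (x y : Fin M → Fin K) (σ : Equiv.Perm (Fin K)) :
    hammingDist x (σ.symm ∘ y) = ∑ a, ∑ b, if b = σ a then 0 else ctab x y a b := by
  classical
  unfold hammingDist
  rw [Finset.card_eq_sum_card_fiberwise (f := x) (t := Finset.univ) (fun _ _ => by simp)]
  refine Finset.sum_congr rfl fun a _ => ?_
  rw [Finset.card_eq_sum_card_fiberwise (f := y) (t := Finset.univ) (fun _ _ => by simp)]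
  refine Finset.sum_congr rfl fun b _ => ?_
  unfold ctab
  simp only [Finset.filter_filter]
  split_ifs with h
  · rw [Finset.card_eq_zero, Finset.filter_eq_empty_iff]
    rintro i _ ⟨⟨h1, h2⟩, h3⟩
    apply h1
    simp [h2, h3, h]
  · congr 1
    ext i
    simp only [Finset.mem_filter, Finset.mem_univ, true_and, Function.comp]
    constructor
    · rintro ⟨⟨h1, h2⟩, h3⟩; exact ⟨h2, h3⟩
    · rintro ⟨h2, h3⟩
      refine ⟨⟨?_, h2⟩, h3⟩
      intro h4
      apply h
      rw [← h3, ← h2, h4]; simp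

lemma disag_large {M K : ℕ} (hK : 0 < K) (x y : Fin M → Fin K) (δ : ℝ)
    (hδ1 : δ ≤ 1) (hs : ∀ a, (M : ℝ) / (2 * K) ≤ csize x a)
    (hmin : ∀ σ : Equiv.Perm (Fin K), δ * M ≤ hammingDist x (σ ∘ y)) :
    δ / (4 * K ^ 4) * (M:ℝ) ^ 2 ≤ (disag x y).card := by
  classical
  have : Nonempty (Fin K) := ⟨⟨0, hK⟩⟩
  have hKr : (0:ℝ) < K := by exact_mod_cast hK
  have hM0 : (0:ℝ) ≤ M := by positivity
  have hex : ∀ a, ∃ b, (M:ℝ) / (2 * K^2) ≤ ctab x y a b := by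
    intro a
    have h1 : (M:ℝ) / (2 * K) ≤ ∑ b, (ctab x y a b : ℝ) := by
      have := hs a; rw [csize_eq x y a] at this; push_cast at this; exact this
    by_contra! hc
    have h2 : ∑ b, (ctab x y a b : ℝ) < ∑ b : Fin K, (M:ℝ) / (2 * K^2) :=
      Finset.sum_lt_sum_of_nonempty Finset.univ_nonempty fun b _ => hc b
    simp only [Finset.sum_const, Finset.card_univ, Fintype.card_fin, nsmul_eq_mul] at h2
    have : (K:ℝ) * ((M:ℝ) / (2 * K^2)) = M / (2 * K) := by field_simp
    linarith
  choose f hf using hex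
  by_cases hinj : Function.Injective f
  · let σ : Equiv.Perm (Fin K) := Equiv.ofBijective f (Finite.injective_iff_bijective.mp hinj)
    have hm := hmin σ.symm
    rw [hamming_eq x y σ] at hm
    push_cast at hm
    have : ∃ a b, b ≠ f a ∧ δ * M / K^2 ≤ (ctab x y a b : ℝ) ∨ δ * M ≤ 0 := by
      by_contra! hc
      have hpos := (hc ⟨0, hK⟩ ⟨0, hK⟩).2
      have h2 : ∑ a, ∑ b, (if b = σ a then (0:ℝ) else (ctab x y a b : ℝ)) <
          ∑ a : Fin K, ∑ b : Fin K, δ * M / K^2 := by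
        refine Finset.sum_lt_sum_of_nonempty Finset.univ_nonempty fun a _ => ?_
        refine Finset.sum_lt_sum_of_nonempty Finset.univ_nonempty fun b _ => ?_
        split_ifs with h
        · positivity
        · exact (hc a b).1 h
      simp only [Finset.sum_const, Finset.card_univ, Fintype.card_fin, nsmul_eq_mul] at h2
      have : (K:ℝ) * (K * (δ * M / K^2)) = δ * M := by field_simp
      linarith
    obtain ⟨a, b, ⟨hb, hab⟩ | h0⟩ := this
    · by_cases hneg : δ * M ≤ 0
      · have : δ / (4 * K ^ 4) * (M:ℝ) ^ 2 = (δ * M) * M / (4 * K^4) := by ring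
        rw [this]
        refine le_trans (b := 0) ?_ (by positivity)
        apply div_nonpos_of_nonpos_of_nonneg _ (by positivity)
        exact mul_nonpos_of_nonpos_of_nonneg hneg hM0
      have h3 := ctab_mul_le x y a b a (f a) (by simp [hb])
      have h4 : (ctab x y a b : ℝ) * ctab x y a (f a) ≤ (disag x y).card := by exact_mod_cast h3
      refine le_trans ?_ h4
      calc δ / (4 * K ^ 4) * (M:ℝ) ^ 2 = (δ * M) * M / (4 * K^4) := by ring
        _ ≤ (δ * M) * M / (2 * K^4) := by
          push Not at hneg
          gcongr; norm_num
        _ = (δ * M / K^2) * (M / (2 * K^2)) := by field_simp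
        _ ≤ _ := by
          have := hf a
          gcongr
    · have : δ / (4 * K ^ 4) * (M:ℝ) ^ 2 = (δ * M) * M / (4 * K^4) := by ring
      rw [this]
      refine le_trans (b := 0) ?_ (by positivity)
      apply div_nonpos_of_nonpos_of_nonneg _ (by positivity)
      exact mul_nonpos_of_nonpos_of_nonneg h0 hM0
  · simp only [Function.Injective] at hinj
    push Not at hinj
    obtain ⟨a, a', hff, hne⟩ := hinj
    have h3 := ctab_mul_le x y a (f a) a' (f a') (by simp [hff, hne])
    have h4 : (ctab x y a (f a) : ℝ) * ctab x y a' (f a') ≤ (disag x y).card := by exact_mod_cast h3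
    refine le_trans ?_ h4
    calc δ / (4 * K ^ 4) * (M:ℝ) ^ 2 ≤ 1 / (4 * K ^ 4) * (M:ℝ) ^ 2 := by gcongr
        _ = ((M:ℝ) / (2 * (K:ℝ)^2)) * ((M:ℝ) / (2 * (K:ℝ)^2)) := by field_simp; ring
        _ ≤ _ := by
          have := hf a
          have := hf a'
          gcongr

lemma disag_pos {M K : ℕ} (x y : Fin M → Fin K)
    (h : ∀ σ : Equiv.Perm (Fin K), y ≠ σ ∘ x) : 1 ≤ (disag x y).card := by
  classical
  by_contra! hc
  have h0 : disag x y = ∅ := by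
    rw [← Finset.card_eq_zero]; omega
  have hlt : ∀ i j, i < j → (x i = x j ↔ y i = y j) := by
    intro i j hij
    by_contra hh
    have : (⟨(i, j), hij⟩ : EdgeT M) ∈ disag x y := by simp [disag, hh]
    simp [h0] at this
  have hall : ∀ i j, (x i = x j ↔ y i = y j) := by
    intro i j
    rcases lt_trichotomy i j with h | h | h
    · exact hlt i j h
    · simp [h]
    · rw [eq_comm, hlt j i h, eq_comm]
  have hb : Function.Bijective
      (fun a : {a // a ∈ Set.range x} => (⟨y a.2.choose, ⟨_, rfl⟩⟩ : {b // b ∈ Set.range y})) := by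
    constructor
    · intro a a' haa
      have := (hall _ _).mpr (congrArg Subtype.val haa)
      rw [a.2.choose_spec, a'.2.choose_spec] at this
      exact Subtype.ext this
    · rintro ⟨_, ⟨i, rfl⟩⟩
      refine ⟨⟨x i, ⟨i, rfl⟩⟩, ?_⟩
      apply Subtype.ext
      apply (hall _ _).mp
      exact (⟨i, rfl⟩ : ∃ j, x j = x i).choose_spec
  let e := Equiv.ofBijective _ hb
  apply h (Equiv.extendSubtype e)
  funext i
  rw [Function.comp, Equiv.extendSubtype_apply_of_mem e (x i) ⟨i, rfl⟩]
  apply (hall _ _).mp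
  exact (⟨i, rfl⟩ : ∃ j, x j = x i).choose_spec.symm

/-- real binomial weights -/
noncomputable def binR (p : ℝ) (n k : ℕ) : ℝ := n.choose k * p ^ k * (1 - p) ^ (n - k)

lemma binR_nonneg (p : ℝ) (h0 : 0 ≤ p) (h1 : p ≤ 1) (n k : ℕ) : 0 ≤ binR p n k := by
  have : 0 ≤ 1 - p := by linarith
  unfold binR; positivity

lemma binR_sum (p : ℝ) (n : ℕ) : ∑ k ∈ Finset.range (n+1), binR p n k = 1 := by
  have := add_pow p (1-p) n
  simp only [add_sub_cancel, one_pow] at this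
  rw [this]
  refine Finset.sum_congr rfl fun k _ => ?_
  unfold binR; ring

/-- edge weight law -/
noncomputable def pe {M K : ℕ} (p q : ℝ) (n : ℕ) (x : Fin M → Fin K) (e : EdgeT M) (k : ℕ) : ℝ :=
  if x e.1.1 = x e.1.2 then binR p n k else binR q n k

/-- likelihood -/
noncomputable def lik {M K : ℕ} (p q : ℝ) (n : ℕ) (x : Fin M → Fin K) (g : EdgeT M → ℕ) : ℝ :=
  ∏ e, pe p q n x e (g e)

lemma pe_nonneg {M K : ℕ} (p q : ℝ) (h0 : 0 ≤ p) (h1 : p ≤ 1) (h0' : 0 ≤ q) (h1' : q ≤ 1) (n : ℕ)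
    (x : Fin M → Fin K) (e : EdgeT M) (k : ℕ) : 0 ≤ pe p q n x e k := by
  unfold pe
  split_ifs
  · exact binR_nonneg p h0 h1 n k
  · exact binR_nonneg q h0' h1' n k

/-- support box -/
def box (M n : ℕ) : Finset (EdgeT M → ℕ) := Fintype.piFinset fun _ => Finset.range (n+1)

lemma lik_zero {M K : ℕ} (p q : ℝ) (n : ℕ) (x : Fin M → Fin K) (g : EdgeT M → ℕ)
    (hg : g ∉ box M n) : lik p q n x g = 0 := by
  simp only [box, Fintype.mem_piFinset, Finset.mem_range, not_forall] at hg
  obtain ⟨e, he⟩ := hg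
  refine Finset.prod_eq_zero (Finset.mem_univ e) ?_
  unfold pe binR
  rw [Nat.choose_eq_zero_of_lt (by omega)]
  simp

lemma lik_sum {M K : ℕ} (p q : ℝ) (n : ℕ) (x : Fin M → Fin K) :
    ∑ g ∈ box M n, lik p q n x g = 1 := by
  unfold lik box
  rw [← Finset.prod_univ_sum]
  refine Finset.prod_eq_one fun e _ => ?_
  unfold pe
  split_ifs <;> exact binR_sum _ _

lemma lik_perm {M K : ℕ} (p q : ℝ) (n : ℕ) (x : Fin M → Fin K) (σ : Equiv.Perm (Fin K))
    (g : EdgeT M → ℕ) : lik p q n (σ ∘ x) g = lik p q n x g := by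
  unfold lik pe
  simp

lemma lik_nonneg {M K : ℕ} (p q : ℝ) (h0 : 0 ≤ p) (h1 : p ≤ 1) (h0' : 0 ≤ q) (h1' : q ≤ 1) (n : ℕ)
    (x : Fin M → Fin K) (g : EdgeT M → ℕ) : 0 ≤ lik p q n x g :=
  Finset.prod_nonneg fun e _ => pe_nonneg p q h0 h1 h0' h1' n x e _

lemma bc_lik {M K : ℕ} (p q : ℝ) (h0 : 0 ≤ p) (h1 : p ≤ 1) (h0' : 0 ≤ q) (h1' : q ≤ 1) (n : ℕ)
    (b : ℝ) (hb : (Real.sqrt (p * q) + Real.sqrt ((1-p)*(1-q))) ^ n ≤ b)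
    (x y : Fin M → Fin K) :
    ∑ g ∈ box M n, Real.sqrt (lik p q n x g * lik p q n y g) ≤ b ^ (disag x y).card := by
  have hpn := pe_nonneg (M := M) (K := K) p q h0 h1 h0' h1' n
  have e1 : ∀ g : EdgeT M → ℕ, Real.sqrt (lik p q n x g * lik p q n y g) =
      ∏ e, Real.sqrt (pe p q n x e (g e) * pe p q n y e (g e)) := by
    intro g
    rw [lik, lik, ← Finset.prod_mul_distrib, Real.sqrt_eq_rpow,
      ← Real.finsetProd_rpow _ _ (fun e _ => mul_nonneg (hpn _ _ _) (hpn _ _ _))]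
    simp only [Real.sqrt_eq_rpow]
  simp_rw [e1]
  unfold box
  rw [← Finset.prod_univ_sum (fun _ => Finset.range (n+1))
    (fun e k => Real.sqrt (pe p q n x e k * pe p q n y e k))]
  have e2 : b ^ (disag x y).card =
      ∏ e : EdgeT M, if ¬ (x e.1.1 = x e.1.2 ↔ y e.1.1 = y e.1.2) then b else 1 := by
    rw [Finset.prod_ite]; simp [disag]
  rw [e2]
  refine Finset.prod_le_prod (fun e _ => Finset.sum_nonneg fun k _ => Real.sqrt_nonneg _) ?_
  intro e _
  have self : ∀ p : ℝ, 0 ≤ p → p ≤ 1 →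
      ∑ k ∈ Finset.range (n+1), Real.sqrt (binR p n k * binR p n k) ≤ 1 := by
    intro p h0 h1
    rw [← binR_sum p n]
    refine Finset.sum_le_sum fun k _ => ?_
    rw [Real.sqrt_mul_self (binR_nonneg p h0 h1 n k)]
  have c1 := bc_sum p q h0 h1 h0' h1' n
  have c2 := bc_sum q p h0' h1' h0 h1 n
  rw [mul_comm q p, mul_comm (1-q)] at c2
  unfold pe
  by_cases hx : x e.1.1 = x e.1.2 <;> by_cases hy : y e.1.1 = y e.1.2 <;> simp only [hx, hy]
  · simpa using self p h0 h1
  · simpa [binR, c1] using hb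
  · simpa [binR, c2] using hb
  · simpa using self q h0' h1'

/-- competitors of `x` : inequivalent labelings that are closest to `x` in their orbit -/
def comp {M K : ℕ} (x y : Fin M → Fin K) : Prop :=
  (∀ σ : Equiv.Perm (Fin K), y ≠ σ ∘ x) ∧
    ∀ σ : Equiv.Perm (Fin K), hammingDist x y ≤ hammingDist x (σ ∘ y)

lemma exists_comp {M K : ℕ} (x y : Fin M → Fin K) (h : ∀ σ : Equiv.Perm (Fin K), y ≠ σ ∘ x) :
    ∃ σ : Equiv.Perm (Fin K), comp x (σ ∘ y) := by
  obtain ⟨σ, hσ⟩ := Finite.exists_min (fun σ : Equiv.Perm (Fin K) => hammingDist x (σ ∘ y))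
  refine ⟨σ, ?_, ?_⟩
  · intro τ hτ
    apply h (σ⁻¹ * τ)
    funext i
    have := congrFun hτ i
    simp only [Function.comp, Equiv.Perm.mul_apply] at this ⊢
    rw [← this]; simp
  · intro τ
    exact hσ (τ * σ)

open Classical in
/-- conditional failure probability -/
noncomputable def pf {M K : ℕ} (p q : ℝ) (n : ℕ) (est : (EdgeT M → ℕ) → Fin M → Fin K)
    (x : Fin M → Fin K) : ℝ :=
  ∑ g ∈ box M n, if (∀ σ : Equiv.Perm (Fin K), est g ≠ σ ∘ x) then lik p q n x g else 0

lemma pf_le_one {M K : ℕ} (p q : ℝ) (h0 : 0 ≤ p) (h1 : p ≤ 1) (h0' : 0 ≤ q) (h1' : q ≤ 1) (n : ℕ)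
    (est : (EdgeT M → ℕ) → Fin M → Fin K) (x : Fin M → Fin K) : pf p q n est x ≤ 1 := by
  rw [← lik_sum p q n x]
  refine Finset.sum_le_sum fun g _ => ?_
  split_ifs
  · exact le_rfl
  · exact lik_nonneg p q h0 h1 h0' h1' n x g

open Classical in
lemma pf_le {M K : ℕ} (p q : ℝ) (h0 : 0 ≤ p) (h1 : p ≤ 1) (h0' : 0 ≤ q) (h1' : q ≤ 1) (n : ℕ)
    (est : (EdgeT M → ℕ) → Fin M → Fin K)
    (hest : ∀ g (y : Fin M → Fin K), lik p q n y g ≤ lik p q n (est g) g)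
    (b : ℝ) (hb : (Real.sqrt (p * q) + Real.sqrt ((1-p)*(1-q))) ^ n ≤ b)
    (x : Fin M → Fin K) :
    pf p q n est x ≤ ∑ y : Fin M → Fin K, if comp x y then b ^ (disag x y).card else 0 := by
  calc pf p q n est x ≤ ∑ g ∈ box M n, ∑ y : Fin M → Fin K,
        if comp x y then Real.sqrt (lik p q n x g * lik p q n y g) else 0 := by
        refine Finset.sum_le_sum fun g _ => ?_
        have hnn : ∀ y ∈ (Finset.univ : Finset (Fin M → Fin K)),
            0 ≤ if comp x y then Real.sqrt (lik p q n x g * lik p q n y g) else 0 := by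
          intro y _
          split_ifs
          · exact Real.sqrt_nonneg _
          · exact le_rfl
        split_ifs with hf
        · obtain ⟨σ, hσ⟩ := exists_comp x (est g) hf
          refine le_trans ?_ (Finset.single_le_sum hnn (Finset.mem_univ (σ ∘ est g)))
          rw [if_pos hσ, lik_perm]
          apply Real.le_sqrt_of_sq_le
          rw [sq]
          exact mul_le_mul_of_nonneg_left (hest g x) (lik_nonneg p q h0 h1 h0' h1' n x g)
        · exact Finset.sum_nonneg hnn
    _ = ∑ y : Fin M → Fin K, ∑ g ∈ box M n,
        if comp x y then Real.sqrt (lik p q n x g * lik p q n y g) else 0 := Finset.sum_comm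
    _ ≤ _ := by
        refine Finset.sum_le_sum fun y _ => ?_
        split_ifs
        · exact bc_lik p q h0 h1 h0' h1' n b hb x y
        · simp

lemma measure_fail_le {M K : ℕ} (p q : ℝ) (n : ℕ)
    (est : (EdgeT M → ℕ) → Fin M → Fin K)
    {Ω : Type} [MeasurableSpace Ω] (μ : Measure Ω) [IsProbabilityMeasure μ]
    (X : Ω → Fin M → Fin K) (G : Ω → EdgeT M → ℕ)
    (hj : ∀ x g, (μ {ω | X ω = x ∧ G ω = g}).toReal = ((K:ℝ)⁻¹) ^ M * lik p q n x g) :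
    (μ {ω | ∀ π : Equiv.Perm (Fin K), est (G ω) ≠ π ∘ X ω}).toReal ≤
      ((K:ℝ)⁻¹) ^ M * ∑ x, pf p q n est x := by
  classical
  set w : (Fin M → Fin K) × (EdgeT M → ℕ) → Set Ω := fun t =>
    if (∀ σ : Equiv.Perm (Fin K), est t.2 ≠ σ ∘ t.1) then {ω | X ω = t.1 ∧ G ω = t.2} else ∅ with hw
  have hsub : {ω | ∀ π : Equiv.Perm (Fin K), est (G ω) ≠ π ∘ X ω} ⊆ ⋃ t, w t := by
    intro ω hω
    rw [Set.mem_iUnion]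
    refine ⟨(X ω, G ω), ?_⟩
    have hω' : ∀ π : Equiv.Perm (Fin K), est (G ω) ≠ π ∘ X ω := hω
    simp only [hw]
    rw [if_pos hω']
    simp
  have h1 : μ {ω | ∀ π : Equiv.Perm (Fin K), est (G ω) ≠ π ∘ X ω} ≤
      ∑ t ∈ (Finset.univ : Finset (Fin M → Fin K)) ×ˢ box M n, μ (w t) := by
    refine (measure_mono hsub).trans ((measure_iUnion_le w).trans (le_of_eq ?_))
    refine tsum_eq_sum fun t ht => ?_
    have ht' : t.2 ∉ box M n := by simpa using ht
    simp only [hw]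
    split_ifs
    · have := hj t.1 t.2
      rw [lik_zero p q n t.1 t.2 ht', mul_zero, ENNReal.toReal_eq_zero_iff] at this
      exact this.resolve_right (measure_ne_top _ _)
    · simp
  refine (ENNReal.toReal_mono (ENNReal.sum_ne_top.mpr fun t _ => measure_ne_top _ _) h1).trans ?_
  rw [ENNReal.toReal_sum fun t _ => measure_ne_top _ _, Finset.sum_product, Finset.mul_sum]
  refine Finset.sum_le_sum fun x _ => ?_
  rw [pf, Finset.mul_sum]
  refine Finset.sum_le_sum fun g _ => ?_
  simp only [hw]
  split_ifs
  · exact (hj x g).le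
  · simp

lemma sum_pow_hamming {M K : ℕ} (x : Fin M → Fin K) (u : ℝ) :
    ∑ y : Fin M → Fin K, u ^ hammingDist x y = (1 + (K - 1) * u) ^ M := by
  classical
  have e1 : ∀ y : Fin M → Fin K, u ^ hammingDist x y = ∏ i, if x i ≠ y i then u else 1 := by
    intro y
    rw [Finset.prod_ite]; simp [hammingDist]
  simp_rw [e1]
  have e2 := Finset.prod_univ_sum (fun _ : Fin M => (Finset.univ : Finset (Fin K)))
    (fun i c => if x i ≠ c then u else (1:ℝ))
  rw [Fintype.piFinset_univ] at e2
  rw [← e2]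
  have e3 : ∀ i, ∑ c, (if x i ≠ c then u else (1:ℝ)) = 1 + (K - 1) * u := by
    intro i
    have : ∀ c, (if x i ≠ c then u else (1:ℝ)) = u + if x i = c then 1 - u else 0 := by
      intro c; split_ifs <;> simp_all
    simp_rw [this, Finset.sum_add_distrib]
    simp
    ring
  rw [Finset.prod_congr rfl fun i _ => e3 i]
  simp

open Classical in
lemma good_bound {M K : ℕ} (hK : 0 < K) (x : Fin M → Fin K) (I δ θ : ℝ) (hI : 0 ≤ I)
    (hδ1 : δ ≤ 1) (hδK : K * δ ≤ 1 / 2)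
    (hgood : ∀ a, (1 / K - δ) * M ≤ csize x a)
    (hθ : θ ≤ I * M * (2 / K - 3 * δ)) :
    (∑ y : Fin M → Fin K, if comp x y then Real.exp (-I) ^ (disag x y).card else 0) ≤
      ((1 + K * Real.exp (-θ)) ^ M - 1) + K ^ M * Real.exp (-(I * (δ / (4 * K ^ 4) * M ^ 2))) := by
  have hKr : (0:ℝ) < K := by exact_mod_cast hK
  have hpt : ∀ y : Fin M → Fin K, (if comp x y then Real.exp (-I) ^ (disag x y).card else 0) ≤
      (if y = x then 0 else Real.exp (-θ) ^ hammingDist x y) +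
        Real.exp (-(I * (δ / (4 * K ^ 4) * M ^ 2))) := by
    intro y
    split_ifs with hc hyx hyx
    · exact absurd (show y = (1 : Equiv.Perm (Fin K)) ∘ x by rw [hyx]; rfl) (hc.1 1)
    · rw [← Real.exp_nat_mul, ← Real.exp_nat_mul]
      rcases le_or_gt ((hammingDist x y : ℝ)) (δ * M) with hd | hd
      · refine le_trans ?_ (le_add_of_nonneg_right (Real.exp_pos _).le)
        apply Real.exp_le_exp.mpr
        have h1 := disag_small x y _ hgood
        have h2 : (hammingDist x y : ℝ) * (M * (2 / K - 3 * δ)) ≤ (disag x y).card := by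
          refine le_trans ?_ h1
          apply mul_le_mul_of_nonneg_left _ (by positivity)
          have : (2:ℝ) / K = 2 * (1 / K) := by ring
          rw [this]
          linarith
        have h3 : (hammingDist x y : ℝ) * θ ≤ hammingDist x y * (I * M * (2 / K - 3 * δ)) :=
          mul_le_mul_of_nonneg_left hθ (by positivity)
        have h4 := mul_le_mul_of_nonneg_left h2 hI
        linarith
      · refine le_trans ?_ (le_add_of_nonneg_left (Real.exp_pos _).le)
        apply Real.exp_le_exp.mpr
        have h1 := disag_large hK x y δ hδ1 (fun a => by
          refine le_trans ?_ (hgood a)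
          rw [div_eq_mul_inv, mul_comm]
          apply mul_le_mul_of_nonneg_right _ (by positivity)
          rw [le_sub_iff_add_le]
          have : (2 * (K:ℝ))⁻¹ + δ = (1 / 2 + K * δ) / K := by field_simp
          rw [this]
          gcongr
          linarith)
          (fun σ => hd.le.trans (by exact_mod_cast hc.2 σ))
        have h4 := mul_le_mul_of_nonneg_left h1 hI
        linarith
    · positivity
    · positivity
  refine (Finset.sum_le_sum fun y _ => hpt y).trans ?_
  rw [Finset.sum_add_distrib]
  have e1 : ∑ y : Fin M → Fin K, (if y = x then 0 else Real.exp (-θ) ^ hammingDist x y) =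
      (1 + (K - 1) * Real.exp (-θ)) ^ M - 1 := by
    rw [← sum_pow_hamming x, ← Finset.add_sum_erase _ _ (Finset.mem_univ x),
      ← Finset.add_sum_erase Finset.univ (fun y => Real.exp (-θ) ^ hammingDist x y)
        (Finset.mem_univ x)]
    simp only [if_true, hammingDist_self, pow_zero, zero_add, add_sub_cancel_left]
    refine Finset.sum_congr rfl fun y hy => ?_
    rw [if_neg (Finset.ne_of_mem_erase hy)]
  rw [e1]
  have hK1 : (1:ℝ) ≤ K := by exact_mod_cast hK
  have hpos := Real.exp_pos (-θ)
  apply add_le_add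
  · gcongr
    · have : 0 ≤ ((K:ℝ) - 1) * Real.exp (-θ) := mul_nonneg (by linarith) hpos.le
      linarith
  · simp

lemma sum_exp_csize {M K : ℕ} (a : Fin K) (t : ℝ) :
    ∑ x : Fin M → Fin K, Real.exp (-t * csize x a) = (K - 1 + Real.exp (-t)) ^ M := by
  classical
  have e1 : ∀ x : Fin M → Fin K, Real.exp (-t * csize x a) =
      ∏ i, if x i = a then Real.exp (-t) else 1 := by
    intro y
    rw [Finset.prod_ite, mul_comm, Real.exp_nat_mul]; simp [csize]
  simp_rw [e1]
  rw [← Fintype.sum_pow (fun c : Fin K => if c = a then Real.exp (-t) else 1) M]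
  congr 1
  have : ∀ c, (if c = a then Real.exp (-t) else (1:ℝ)) = 1 + if c = a then Real.exp (-t) - 1 else 0 := by
    intro c; split_ifs <;> simp
  simp_rw [this, Finset.sum_add_distrib]
  simp
  ring

open Classical in
lemma bad_bound {M K : ℕ} (hK : 0 < K) (δ : ℝ) (hδ0 : 0 ≤ δ) (hδK : K * δ ≤ 1) :
    (((Finset.univ.filter fun x : Fin M → Fin K =>
      ∃ a, (csize x a : ℝ) < (1 / K - δ) * M).card : ℕ) : ℝ) ≤
      K ^ M * (K * Real.exp (-(K * δ ^ 2 / 4 * M))) := by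
  have hKr : (0:ℝ) < K := by exact_mod_cast hK
  set t : ℝ := K * δ / 2 with ht
  have ht0 : 0 ≤ t := by positivity
  have hexp : Real.exp (-t) ≤ 1 - t + t ^ 2 := by
    have := Real.abs_exp_sub_one_sub_id_le (x := -t) (by rw [abs_neg, abs_of_nonneg ht0]; linarith)
    have := (abs_le.mp this).2
    nlinarith
  have hone : ∀ a : Fin K, (((Finset.univ.filter fun x : Fin M → Fin K =>
      (csize x a : ℝ) < (1 / K - δ) * M).card : ℕ) : ℝ) ≤
      K ^ M * Real.exp (-(K * δ ^ 2 / 4 * M)) := by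
    intro a
    have h1 : (((Finset.univ.filter fun x : Fin M → Fin K =>
      (csize x a : ℝ) < (1 / K - δ) * M).card : ℕ) : ℝ) ≤
        ∑ x : Fin M → Fin K, Real.exp (t * ((1 / K - δ) * M)) * Real.exp (-t * csize x a) := by
      rw [Finset.card_filter]
      push_cast
      refine Finset.sum_le_sum fun x _ => ?_
      split_ifs with h
      · rw [← Real.exp_add]
        apply Real.one_le_exp
        nlinarith
      · positivity
    refine h1.trans ?_
    rw [← Finset.mul_sum, sum_exp_csize]
    have h2 : (K - 1 + Real.exp (-t)) ≤ K * Real.exp ((t ^ 2 - t) / K) := by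
      have := Real.add_one_le_exp ((t ^ 2 - t) / K)
      have h3 := mul_le_mul_of_nonneg_left this hKr.le
      have h4 : (K:ℝ) * ((t ^ 2 - t) / K + 1) = t ^ 2 - t + K := by field_simp
      linarith
    have hK1 : (1:ℝ) ≤ K := by exact_mod_cast hK
    have h5 : (K - 1 + Real.exp (-t)) ^ M ≤ (K * Real.exp ((t ^ 2 - t) / K)) ^ M := by
      have := Real.exp_pos (-t)
      exact pow_le_pow_left₀ (by linarith) h2 M
    refine (mul_le_mul_of_nonneg_left h5 (Real.exp_pos _).le).trans (le_of_eq ?_)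
    rw [mul_pow, ← Real.exp_nat_mul, mul_left_comm, ← Real.exp_add]
    congr 2
    rw [ht]
    field_simp
    ring
  have hsub : (Finset.univ.filter fun x : Fin M → Fin K =>
      ∃ a, (csize x a : ℝ) < (1 / K - δ) * M) ⊆ Finset.univ.biUnion fun a =>
      (Finset.univ.filter fun x : Fin M → Fin K => (csize x a : ℝ) < (1 / K - δ) * M) := by
    intro x
    simp
  have h1 := (Finset.card_le_card hsub).trans Finset.card_biUnion_le
  have h2 : (((Finset.univ.filter fun x : Fin M → Fin K =>
      ∃ a, (csize x a : ℝ) < (1 / K - δ) * M).card : ℕ) : ℝ) ≤ ∑ a : Fin K,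
      (((Finset.univ.filter fun x : Fin M → Fin K =>
      (csize x a : ℝ) < (1 / K - δ) * M).card : ℕ) : ℝ) := by exact_mod_cast h1
  refine h2.trans ((Finset.sum_le_sum fun a _ => hone a).trans (le_of_eq ?_))
  simp
  ring

open Classical in
/-- the non-asymptotic bound used in regime (ii) -/
lemma avg_bound {M K : ℕ} (hK : 0 < K) (f : (Fin M → Fin K) → ℝ) (hf1 : ∀ x, f x ≤ 1)
    (I δ θ : ℝ) (hI : 0 ≤ I)
    (hf : ∀ x, f x ≤ ∑ y : Fin M → Fin K, if comp x y then Real.exp (-I) ^ (disag x y).card else 0)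
    (hδ0 : 0 ≤ δ) (hδ1 : δ ≤ 1) (hδK : K * δ ≤ 1 / 2)
    (hθ : θ ≤ I * M * (2 / K - 3 * δ)) :
    ((K:ℝ)⁻¹) ^ M * ∑ x, f x ≤ K * Real.exp (-(K * δ ^ 2 / 4 * M)) +
      (((1 + K * Real.exp (-θ)) ^ M - 1) +
        K ^ M * Real.exp (-(I * (δ / (4 * K ^ 4) * M ^ 2)))) := by
  have hKr : (0:ℝ) < K := by exact_mod_cast hK
  set B := ((1 + K * Real.exp (-θ)) ^ M - 1) +
        K ^ M * Real.exp (-(I * (δ / (4 * K ^ 4) * M ^ 2))) with hB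
  have hB0 : 0 ≤ B := by
    have : (1:ℝ) ≤ (1 + K * Real.exp (-θ)) ^ M := one_le_pow₀ (by
      have : 0 ≤ K * Real.exp (-θ) := by positivity
      linarith)
    have : 0 ≤ K ^ M * Real.exp (-(I * (δ / (4 * K ^ 4) * M ^ 2))) := by positivity
    linarith
  have h1 : ∀ x, f x ≤ (if ∃ a, (csize x a : ℝ) < (1 / K - δ) * M then 1 else 0) + B := by
    intro x
    split_ifs with h
    · linarith [hf1 x]
    · push Not at h
      rw [zero_add]
      exact (hf x).trans (good_bound hK x I δ θ hI hδ1 hδK h hθ)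
  have h2 : ∑ x, f x ≤ K ^ M * (K * Real.exp (-(K * δ ^ 2 / 4 * M))) + K ^ M * B := by
    refine (Finset.sum_le_sum fun x _ => h1 x).trans ?_
    rw [Finset.sum_add_distrib]
    apply add_le_add
    · have := bad_bound (M := M) hK δ hδ0 (by linarith)
      rw [Finset.card_filter] at this
      push_cast at this
      exact this
    · simp
  calc _ ≤ ((K:ℝ)⁻¹) ^ M * (K ^ M * (K * Real.exp (-(K * δ ^ 2 / 4 * M))) + K ^ M * B) := by
        gcongr
    _ = _ := by
      rw [← mul_add, ← mul_assoc, ← mul_pow, inv_mul_cancel₀ hKr.ne', one_pow, one_mul]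

open Filter Topology in
lemma regime_two {K : ℕ} (hK : 0 < K) (M : ℕ → ℕ) (hM : Tendsto M atTop atTop)
    (I : ℕ → ℝ) (ε : ℝ) (hε : 0 < ε)
    (hI : ∀ᶠ n in atTop, (1 + ε) * (K / 2 * Real.log (M n)) ≤ I n * M n)
    (hI0 : ∀ n, 0 ≤ I n)
    (δ : ℝ) (hδ : δ = ε / (4 * K * (1 + ε)))
    (F : ℕ → ℝ) (hF0 : ∀ n, 0 ≤ F n)
    (hF : ∀ n θ, θ ≤ I n * M n * (2 / K - 3 * δ) →
      F n ≤ K * Real.exp (-(K * δ ^ 2 / 4 * M n)) +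
      (((1 + K * Real.exp (-θ)) ^ M n - 1) +
        K ^ M n * Real.exp (-(I n * (δ / (4 * K ^ 4) * M n ^ 2))))) :
    Tendsto F atTop (𝓝 0) := by
  have hKr : (0:ℝ) < K := by exact_mod_cast hK
  have hδ0 : 0 < δ := by rw [hδ]; positivity
  have hKδ : (K:ℝ) * δ * (1 + ε) = ε / 4 := by rw [hδ]; field_simp
  have hMr : Tendsto (fun n => (M n : ℝ)) atTop atTop := tendsto_natCast_atTop_atTop.comp hM
  have hlog : Tendsto (fun n => Real.log (M n)) atTop atTop := Real.tendsto_log_atTop.comp hMr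
  have t1 : Tendsto (fun n => (K:ℝ) * Real.exp (-(K * δ ^ 2 / 4 * M n))) atTop (𝓝 0) := by
    have : Tendsto (fun n => Real.exp (-(K * δ ^ 2 / 4 * M n))) atTop (𝓝 0) :=
      Real.tendsto_exp_neg_atTop_nhds_zero.comp (hMr.const_mul_atTop (by positivity))
    simpa using this.const_mul (K:ℝ)
  have t2 : Tendsto (fun n => Real.exp (K * Real.exp (-(ε / 2 * Real.log (M n)))) - 1)
      atTop (𝓝 0) := by
    have h : Tendsto (fun n => Real.exp (-(ε / 2 * Real.log (M n)))) atTop (𝓝 0) :=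
      Real.tendsto_exp_neg_atTop_nhds_zero.comp (hlog.const_mul_atTop (by positivity))
    have h2 := (Real.continuous_exp.tendsto _).comp (h.const_mul (K:ℝ))
    have h3 := h2.sub_const 1
    simpa [Function.comp_def] using h3
  have t3 : Tendsto (fun n => Real.exp (-(M n : ℝ))) atTop (𝓝 0) :=
    Real.tendsto_exp_neg_atTop_nhds_zero.comp hMr
  have tt := t1.add (t2.add t3)
  simp only [add_zero] at tt
  refine tendsto_of_tendsto_of_tendsto_of_le_of_le' tendsto_const_nhds tt
    (Eventually.of_forall hF0) ?_
  have hbig : ∀ᶠ n in atTop, (Real.log K + 1) / (δ / (4 * K ^ 4)) / ((1 + ε) * (K / 2))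
      ≤ Real.log (M n) := hlog.eventually_ge_atTop _
  filter_upwards [hI, hbig, hMr.eventually_ge_atTop 1] with n hn hb hM1
  have hlog0 : 0 ≤ Real.log (M n) := Real.log_nonneg hM1
  have hM0 : (0:ℝ) < M n := by linarith
  set ℓ := Real.log (M n) with hℓ
  refine (hF n ((1 + ε / 2) * ℓ) ?_).trans ?_
  · have hpos : 0 ≤ 2 / K - 3 * δ := by
      have : 2 / K - 3 * δ = (2 - 3 * (K * δ)) / K := by field_simp
      rw [this]
      apply div_nonneg _ hKr.le
      have : (K:ℝ) * δ ≤ 1 / 4 := by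
        by_contra! hc
        nlinarith
      linarith
    refine le_trans ?_ (mul_le_mul_of_nonneg_right hn hpos)
    have : (1 + ε) * (K / 2 * ℓ) * (2 / K - 3 * δ) = ℓ * ((1 + ε) - 3 / 2 * (K * δ * (1 + ε))) := by
      field_simp
    rw [this, hKδ]
    nlinarith
  · refine add_le_add le_rfl (add_le_add ?_ ?_)
    · apply sub_le_sub_right
      have h1 : (1 + K * Real.exp (-((1 + ε / 2) * ℓ))) ^ M n ≤
          Real.exp (K * Real.exp (-((1 + ε / 2) * ℓ))) ^ M n := by
        have := Real.add_one_le_exp (K * Real.exp (-((1 + ε / 2) * ℓ)))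
        gcongr
        linarith
      refine h1.trans (le_of_eq ?_)
      rw [← Real.exp_nat_mul]
      congr 1
      have h2 : (M n : ℝ) = Real.exp ℓ := (Real.exp_log hM0).symm
      rw [h2, mul_left_comm, ← Real.exp_add]
      congr 2
      ring
    · have h1 : (K:ℝ) ^ M n = Real.exp (M n * Real.log K) := by
        rw [Real.exp_nat_mul, Real.exp_log hKr]
      rw [h1, ← Real.exp_add]
      apply Real.exp_le_exp.mpr
      set c := δ / (4 * (K:ℝ) ^ 4) with hc
      have hc0 : 0 < c := by positivity
      have hb' : Real.log K + 1 ≤ c * (I n * M n) := by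
        rw [div_div, div_le_iff₀ (by positivity)] at hb
        have := mul_le_mul_of_nonneg_left hn hc0.le
        linarith
      have := mul_le_mul_of_nonneg_left hb' hM0.le
      nlinarith

/-- Under CO-1 measurements of `SSBM(N,K,αρ(N),βρ(N))` with `ρ(N) → 0`, the
probability that the MAP estimator fails to recover the c-node profile vector `x ∈ [K]^M`
(up to relabeling of the community indices) tends to zero in either of the regimes:
(i) `M` finite, `r√ρ(N) → ∞` and `α ≠ β`; or (ii) `M, N → ∞` and
`(α+β)/2 − √(αβ) > lim (K/2)·log M/(r²ρ(N)M)`. -/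
theorem MAP_failure_tendsto_zero_CO_one
    (K : ℕ) (hK : 0 < K)
    (α β : ℝ) (hα : 0 < α) (hβ : 0 < β)
    -- the sequences of fine sizes, measurement sizes, coverage sizes and probability scalings
    (N M r : ℕ → ℕ) (ρ : ℕ → ℝ)
    (hρpos : ∀ n, 0 < ρ n) (hρlt : ∀ n, ρ n < 1)
    (hp1 : ∀ n, α * ρ n ≤ 1) (hq1 : ∀ n, β * ρ n ≤ 1)
    (hrpos : ∀ n, 0 < r n) (hrM : ∀ n, r n * M n ≤ N n)
    -- `ρ(N) → 0` as `N → ∞`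
    (hρ0 : Filter.Tendsto ρ Filter.atTop (nhds 0))
    -- the CO-1 coarse model for each `n`: c-node labels `X` i.i.d. uniform on `[K]`, weighted
    -- coarse graph `G` with conditionally independent `Binomial(r², p)`/`Binomial(r², q)`
    -- weights, expressed through the joint point masses
    (Ω : ℕ → Type) (mΩ : ∀ n, MeasurableSpace (Ω n)) (μ : ∀ n, Measure (Ω n))
    (hprob : ∀ n, IsProbabilityMeasure (μ n))
    (X : ∀ n, Ω n → Fin (M n) → Fin K)
    (G : ∀ n, Ω n → {e : Fin (M n) × Fin (M n) // e.1 < e.2} → ℕ)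
    (hjoint : ∀ (n : ℕ) (x : Fin (M n) → Fin K)
      (g : {e : Fin (M n) × Fin (M n) // e.1 < e.2} → ℕ),
      ((μ n) {ω | X n ω = x ∧ G n ω = g}).toReal =
        ((K : ℝ)⁻¹) ^ (M n) *
          ∏ e : {e : Fin (M n) × Fin (M n) // e.1 < e.2},
            ((if x e.1.1 = x e.1.2 then
                binomialNat (ENNReal.ofReal (α * ρ n))
                  (ENNReal.ofReal_le_one.mpr (hp1 n)) (r n ^ 2)
              else
                binomialNat (ENNReal.ofReal (β * ρ n))
                  (ENNReal.ofReal_le_one.mpr (hq1 n)) (r n ^ 2)) (g e)).toReal)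
    -- a MAP estimator of the c-node profile vector from the coarse measurements
    (est : ∀ n, ({e : Fin (M n) × Fin (M n) // e.1 < e.2} → ℕ) → Fin (M n) → Fin K)
    (hMAP : ∀ n g y,
      (μ n) {ω | X n ω = y ∧ G n ω = g} ≤ (μ n) {ω | X n ω = est n g ∧ G n ω = g})
    -- either regime (i) or regime (ii)
    (hreg :
      ((∃ M₀, ∀ n, M n = M₀) ∧
        Filter.Tendsto (fun n => (r n : ℝ) * Real.sqrt (ρ n)) Filter.atTop Filter.atTop ∧
        α ≠ β) ∨
      (Filter.Tendsto M Filter.atTop Filter.atTop ∧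
        Filter.Tendsto N Filter.atTop Filter.atTop ∧
        ∃ L : ℝ,
          Filter.Tendsto (fun n =>
              ((K : ℝ) / 2) * Real.log (M n) / ((r n : ℝ) ^ 2 * ρ n * (M n : ℝ)))
            Filter.atTop (nhds L) ∧
          (α + β) / 2 - Real.sqrt (α * β) > L)) :
    -- conclusion: the failure probability (up to relabeling of the community indices)
    -- tends to zero
    Filter.Tendsto (fun n =>
        ((μ n) {ω | ∀ π : Equiv.Perm (Fin K), est n (G n ω) ≠ π ∘ X n ω}).toReal)
      Filter.atTop (nhds 0) := by
  classical
  have hα0 : ∀ n, 0 ≤ α * ρ n := fun n => (mul_pos hα (hρpos n)).le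
  have hβ0 : ∀ n, 0 ≤ β * ρ n := fun n => (mul_pos hβ (hρpos n)).le
  have hKr : (0:ℝ) < K := by exact_mod_cast hK
  set J : ℝ := (α + β) / 2 - Real.sqrt (α * β) with hJ
  set I : ℕ → ℝ := fun n => ((r n ^ 2 : ℕ) : ℝ) * ρ n * J with hI
  have hj : ∀ n x g, ((μ n) {ω | X n ω = x ∧ G n ω = g}).toReal =
      ((K:ℝ)⁻¹) ^ (M n) * lik (α * ρ n) (β * ρ n) (r n ^ 2) x g := by
    intro n x g
    rw [hjoint n x g, lik]
    congr 1
    refine Finset.prod_congr rfl fun e _ => ?_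
    unfold pe
    split_ifs
    · exact binom_toReal _ (hα0 n) (hp1 n) _ _
    · exact binom_toReal _ (hβ0 n) (hq1 n) _ _
  have hest : ∀ n g (y : Fin (M n) → Fin K), lik (α * ρ n) (β * ρ n) (r n ^ 2) y g ≤
      lik (α * ρ n) (β * ρ n) (r n ^ 2) (est n g) g := by
    intro n g y
    have := hprob n
    have h := ENNReal.toReal_mono (measure_ne_top _ _) (hMAP n g y)
    rw [hj, hj] at h
    exact le_of_mul_le_mul_left h (by positivity)
  set f : ∀ n, (Fin (M n) → Fin K) → ℝ := fun n =>
    pf (α * ρ n) (β * ρ n) (r n ^ 2) (est n) with hf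
  have hfail : ∀ n, ((μ n) {ω | ∀ π : Equiv.Perm (Fin K), est n (G n ω) ≠ π ∘ X n ω}).toReal ≤
      ((K:ℝ)⁻¹) ^ (M n) * ∑ x, f n x := by
    intro n
    have := hprob n
    exact measure_fail_le (α * ρ n) (β * ρ n) (r n ^ 2) (est n) (μ n) (X n) (G n) (hj n)
  have hf1 : ∀ n x, f n x ≤ 1 := fun n x =>
    pf_le_one _ _ (hα0 n) (hp1 n) (hβ0 n) (hq1 n) _ _ x
  have hf2 : ∀ n x, f n x ≤ ∑ y : Fin (M n) → Fin K,
      if comp x y then Real.exp (-(I n)) ^ (disag x y).card else 0 := by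
    intro n x
    exact pf_le _ _ (hα0 n) (hp1 n) (hβ0 n) (hq1 n) _ _ (hest n) _
      (bc_le α β (ρ n) (hρpos n).le (hp1 n) (hq1 n) (r n ^ 2)) x
  have hJ0 : 0 ≤ J := by
    have h1 : Real.sqrt (α * β) ≤ (α + β) / 2 :=
      Real.sqrt_le_iff.mpr ⟨by positivity, by nlinarith [sq_nonneg (α - β)]⟩
    linarith
  have hI0 : ∀ n, 0 ≤ I n := fun n => by
    have := hρpos n
    simp only [hI]
    positivity
  rcases hreg with ⟨⟨M₀, hM₀⟩, hr, hne⟩ | ⟨hM, -, L, hL, hJL⟩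
  · have hJpos : 0 < J := by
      have h1 : Real.sqrt (α * β) < (α + β) / 2 := by
        rw [Real.sqrt_lt' (by positivity)]
        have : 0 < (α - β) ^ 2 := by
          have : α - β ≠ 0 := sub_ne_zero.mpr hne
          positivity
        nlinarith
      linarith
    have hIt : Filter.Tendsto I Filter.atTop Filter.atTop := by
      have h2 := (hr.atTop_mul_atTop₀ hr).atTop_mul_const hJpos
      refine h2.congr fun n => ?_
      simp only [hI]
      push_cast
      have := Real.mul_self_sqrt (hρpos n).le
      calc _ = (r n : ℝ) ^ 2 * (Real.sqrt (ρ n) * Real.sqrt (ρ n)) * J := by ring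
        _ = _ := by rw [this]
    have hb : Filter.Tendsto (fun n => (K:ℝ) ^ M₀ * Real.exp (-(I n))) Filter.atTop (nhds 0) := by
      simpa using (Real.tendsto_exp_neg_atTop_nhds_zero.comp hIt).const_mul ((K:ℝ) ^ M₀)
    refine squeeze_zero (fun n => ENNReal.toReal_nonneg) (fun n => (hfail n).trans ?_) hb
    rw [← hM₀ n]
    have h3 : ∀ x, f n x ≤ (K:ℝ) ^ M n * Real.exp (-(I n)) := by
      intro x
      refine (hf2 n x).trans ?_
      have h4 : ∀ y ∈ (Finset.univ : Finset (Fin (M n) → Fin K)),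
          (if comp x y then Real.exp (-(I n)) ^ (disag x y).card else 0) ≤ Real.exp (-(I n)) := by
        intro y _
        split_ifs with hc
        · exact pow_le_of_le_one (Real.exp_pos _).le
            (Real.exp_le_one_iff.mpr (by linarith [hI0 n]))
            (by have := disag_pos x y hc.1; omega)
        · exact (Real.exp_pos _).le
      refine (Finset.sum_le_sum h4).trans ?_
      simp
    calc _ ≤ ((K:ℝ)⁻¹) ^ (M n) * ∑ x : Fin (M n) → Fin K, (K:ℝ) ^ M n * Real.exp (-(I n)) := by
          gcongr with x
          exact h3 x
      _ = _ := by
        rw [Finset.sum_const]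
        simp only [Finset.card_univ, Fintype.card_fun, Fintype.card_fin, nsmul_eq_mul]
        push_cast
        rw [← mul_assoc, ← mul_pow, inv_mul_cancel₀ hKr.ne', one_pow, one_mul]
  · have hMr : Filter.Tendsto (fun n => (M n : ℝ)) Filter.atTop Filter.atTop :=
      tendsto_natCast_atTop_atTop.comp hM
    have hL0 : 0 ≤ L := by
      refine ge_of_tendsto hL ?_
      filter_upwards [hMr.eventually_ge_atTop 1] with n hn
      have := hρpos n
      have := Real.log_nonneg hn
      positivity
    set J' := (L + J) / 2 with hJ'
    have hJ'0 : 0 < J' := by rw [hJ']; linarith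
    have hJ'L : L < J' := by rw [hJ']; linarith
    have hJ'J : J' < J := by rw [hJ']; linarith
    set ε := J / J' - 1 with hε
    have hε0 : 0 < ε := by
      rw [hε, sub_pos, lt_div_iff₀ hJ'0]; linarith
    set δ := ε / (4 * K * (1 + ε)) with hδ
    have hδ0 : 0 ≤ δ := by rw [hδ]; positivity
    have hKδ : (K:ℝ) * δ ≤ 1 / 4 := by
      have : (K:ℝ) * δ = ε / (4 * (1 + ε)) := by rw [hδ]; field_simp
      rw [this, div_le_div_iff₀ (by positivity) (by norm_num)]
      linarith
    have hδ1 : δ ≤ 1 := by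
      have : (1:ℝ) ≤ K := by exact_mod_cast hK
      nlinarith
    refine regime_two hK M hM I ε hε0 ?_ hI0 δ hδ _ (fun n => ENNReal.toReal_nonneg) ?_
    · filter_upwards [hL.eventually_lt_const hJ'L, hMr.eventually_ge_atTop 1] with n hn hM1
      have h1 := hρpos n
      have h2 : (0:ℝ) < r n := by exact_mod_cast hrpos n
      rw [div_lt_iff₀ (by positivity)] at hn
      have h3 : 1 + ε = J / J' := by rw [hε]; ring
      rw [h3]
      have h4 := mul_le_mul_of_nonneg_left hn.le (div_nonneg hJ0 hJ'0.le)
      refine h4.trans (le_of_eq ?_)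
      simp only [hI]
      push_cast
      field_simp
    · intro n θ hθ
      exact (hfail n).trans (avg_bound hK (f n) (hf1 n) (I n) δ θ (hI0 n) (hf2 n) hδ0 hδ1
        (by linarith) hθ)
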